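/- Let σ₃ be the map (w,y,z) ↦ (w·y³/z³, √−1·y, y²/z) on the set T = {(w,y,z) ∈ ℂ³ : w ≠ 0, y ≠ 0, z ≠ 0}. Then σ₃ maps T to itself, σ₃(σ₃(w,y,z)) = (−√−1·w, −y, −z) for all (w,y,z) ∈ T, the fourth iterate of σ₃ equals (w,y,z) ↦ (−w, y, z), and the eighth iterate of σ₃ is the identity on T. Hence σ₃ has order exactly 8 as a permutation of T. -/

import Mathlib

/-- The map `σ₃ : (w, y, z) ↦ (w·y³/z³, √-1·y, y²/z)`. -/
noncomputable def sigma3 : ℂ × ℂ × ℂ → ℂ × ℂ × ℂ :=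
  fun p => (p.1 * p.2.1 ^ 3 / p.2.2 ^ 3, Complex.I * p.2.1, p.2.1 ^ 2 / p.2.2)

/-- The set `T = {(w,y,z) ∈ ℂ³ : w ≠ 0, y ≠ 0, z ≠ 0}`. -/
def Tset : Set (ℂ × ℂ × ℂ) := {p | p.1 ≠ 0 ∧ p.2.1 ≠ 0 ∧ p.2.2 ≠ 0}

/-!
The monomial map `σ(w, y, z) = (w y³ / z³, ζ y, y² / z)` is an involution on the torus when `ζ = 1`,
and for general `ζ` its square is the scaling `(ζ³ w, ζ² y, ζ² z)`. Hence `σ^(2n)` is the scaling by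
`(ζ^(3n), ζ^(2n), ζ^(2n))`, which is trivial exactly when `ζⁿ = 1`, while an odd power of `σ` is
never trivial. So `σ` has order `2 * orderOf ζ`, and `ζ = √-1` has order `4`.
-/

section MonomialTwist

open Set

variable {K : Type*} [CommGroupWithZero K] {ζ : K}

/-- The map `(w, y, z) ↦ (w y³ / z³, ζ y, y² / z)`, of which `σ₃` is the case `ζ = √-1`. It is a
total function on `K × K × K`, meaningful where `z ≠ 0`. -/
def monomialTwist (ζ : K) (p : K × K × K) : K × K × K :=
  (p.1 * p.2.1 ^ 3 / p.2.2 ^ 3, ζ * p.2.1, p.2.1 ^ 2 / p.2.2)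

variable (K) in
/-- The split torus of rank three: the triples with all coordinates nonzero. It generalizes `Tset`,
with which it agrees definitionally for `K = ℂ`. -/
def coordTorus : Set (K × K × K) := {p | p.1 ≠ 0 ∧ p.2.1 ≠ 0 ∧ p.2.2 ≠ 0}

theorem mapsTo_monomialTwist (hζ : ζ ≠ 0) :
    MapsTo (monomialTwist ζ) (coordTorus K) (coordTorus K) := by
  rintro ⟨w, y, z⟩ ⟨hw, hy, hz⟩
  exact ⟨div_ne_zero (mul_ne_zero hw (pow_ne_zero 3 hy)) (pow_ne_zero 3 hz), mul_ne_zero hζ hy,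
    div_ne_zero (pow_ne_zero 2 hy) hz⟩

theorem monomialTwist_monomialTwist (ζ w : K) {y z : K} (hy : y ≠ 0) (hz : z ≠ 0) :
    monomialTwist ζ (monomialTwist ζ (w, y, z)) = (ζ ^ 3 * w, ζ ^ 2 * y, ζ ^ 2 * z) := by
  simp only [monomialTwist, Prod.mk.injEq]
  refine ⟨?_, ?_, ?_⟩ <;> field_simp

theorem monomialTwist_iterate_two_mul (hζ : ζ ≠ 0) (n : ℕ) (w : K) {y z : K} (hy : y ≠ 0)
    (hz : z ≠ 0) :
    (monomialTwist ζ)^[2 * n] (w, y, z) =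
      (ζ ^ (3 * n) * w, ζ ^ (2 * n) * y, ζ ^ (2 * n) * z) := by
  induction n with
  | zero => simp
  | succ n ih =>
    have hζn : ζ ^ (2 * n) ≠ 0 := pow_ne_zero _ hζ
    rw [mul_add_one, Function.iterate_succ_apply', Function.iterate_succ_apply', ih,
      monomialTwist_monomialTwist ζ _ (mul_ne_zero hζn hy) (mul_ne_zero hζn hz)]
    simp only [← mul_assoc, ← pow_add, mul_add_one, add_comm]

theorem bijOn_monomialTwist (hζ : ζ ≠ 0) :
    BijOn (monomialTwist ζ) (coordTorus K) (coordTorus K) := by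
  have hmaps := mapsTo_monomialTwist hζ
  refine ⟨hmaps, ?_, ?_⟩
  · rintro ⟨w, y, z⟩ ⟨-, hy, hz⟩ ⟨w', y', z'⟩ ⟨-, hy', hz'⟩ h
    have hsq := congrArg (monomialTwist ζ) h
    rw [monomialTwist_monomialTwist ζ w hy hz, monomialTwist_monomialTwist ζ w' hy' hz'] at hsq
    simpa [hζ] using hsq
  · rintro ⟨w, y, z⟩ ⟨hw, hy, hz⟩
    have hscaled : (w / ζ ^ 3, y / ζ ^ 2, z / ζ ^ 2) ∈ coordTorus K :=
      ⟨div_ne_zero hw (pow_ne_zero 3 hζ), div_ne_zero hy (pow_ne_zero 2 hζ),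
        div_ne_zero hz (pow_ne_zero 2 hζ)⟩
    refine ⟨_, hmaps hscaled, ?_⟩
    rw [monomialTwist_monomialTwist ζ _ hscaled.2.1 hscaled.2.2]
    simp [mul_div_cancel₀, hζ]

theorem monomialTwist_iterate_two_mul_add_one (hζ : ζ ≠ 0) (n : ℕ) (w : K) {y z : K} (hy : y ≠ 0)
    (hz : z ≠ 0) :
    (monomialTwist ζ)^[2 * n + 1] (w, y, z) =
      (ζ ^ (3 * n) * (w * y ^ 3 / z ^ 3), ζ ^ (2 * n) * (ζ * y), ζ ^ (2 * n) * (y ^ 2 / z)) :=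
  monomialTwist_iterate_two_mul hζ n _ (mul_ne_zero hζ hy) (div_ne_zero (pow_ne_zero 2 hy) hz)

theorem eqOn_iterate_two_mul_monomialTwist_id_iff (hζ : ζ ≠ 0) (n : ℕ) :
    EqOn (monomialTwist ζ)^[2 * n] id (coordTorus K) ↔ ζ ^ n = 1 := by
  refine ⟨fun h => ?_, ?_⟩
  · have hone := h (x := (1, 1, 1)) ⟨one_ne_zero, one_ne_zero, one_ne_zero⟩
    rw [monomialTwist_iterate_two_mul hζ n 1 one_ne_zero one_ne_zero] at hone
    obtain ⟨h3, h2, -⟩ : ζ ^ (3 * n) = 1 ∧ ζ ^ (2 * n) = 1 ∧ ζ ^ (2 * n) = 1 := by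
      simpa only [mul_one, id, Prod.mk.injEq] using hone
    calc ζ ^ n = ζ ^ (2 * n) * ζ ^ n := by rw [h2, one_mul]
      _ = ζ ^ (3 * n) := by rw [← pow_add]; ring_nf
      _ = 1 := h3
  · rintro h ⟨w, y, z⟩ ⟨-, hy, hz⟩
    simp [monomialTwist_iterate_two_mul hζ n w hy hz, pow_mul', h]

/- An odd iterate fixing `(1, 1, 1)` has `ζ ^ (3 * n) = ζ ^ (2 * n) = 1`; if it also fixes
`(1, t, 1)` then `t ^ 3 = t ^ 2 = 1`, so `t = 1`. -/
theorem not_eqOn_iterate_two_mul_add_one_monomialTwist_id [Nontrivial Kˣ] (hζ : ζ ≠ 0) (n : ℕ) :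
    ¬ EqOn (monomialTwist ζ)^[2 * n + 1] id (coordTorus K) := by
  intro h
  have hfix (t : Kˣ) : ζ ^ (3 * n) * t ^ 3 = 1 ∧ ζ ^ (2 * n) * t ^ 2 = 1 := by
    have ht := h (x := (1, ↑t, 1)) ⟨one_ne_zero, t.ne_zero, one_ne_zero⟩
    rw [monomialTwist_iterate_two_mul_add_one hζ n 1 t.ne_zero one_ne_zero] at ht
    simp only [one_mul, one_pow, div_one, id, Prod.mk.injEq] at ht
    exact ⟨ht.1, ht.2.2⟩
  obtain ⟨hζ3, hζ2⟩ : ζ ^ (3 * n) = 1 ∧ ζ ^ (2 * n) = 1 := by simpa using hfix 1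
  obtain ⟨t, ht⟩ := exists_ne (1 : Kˣ)
  obtain ⟨ht3, ht2⟩ : t ^ 3 = 1 ∧ t ^ 2 = 1 := by
    simpa only [hζ3, hζ2, one_mul, ← Units.val_pow_eq_pow_val, Units.val_eq_one] using hfix t
  exact ht (by rwa [pow_succ, ht2, one_mul] at ht3)

theorem eqOn_iterate_monomialTwist_id_iff [Nontrivial Kˣ] (hζ : ζ ≠ 0) (n : ℕ) :
    EqOn (monomialTwist ζ)^[n] id (coordTorus K) ↔ 2 * orderOf ζ ∣ n := by
  obtain ⟨m, rfl | rfl⟩ := n.even_or_odd'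
  · rw [eqOn_iterate_two_mul_monomialTwist_id_iff hζ, Nat.mul_dvd_mul_iff_left two_pos,
      orderOf_dvd_iff_pow_eq_one]
  · refine iff_of_false (not_eqOn_iterate_two_mul_add_one_monomialTwist_id hζ m) fun h => ?_
    have two_dvd_odd : 2 ∣ 2 * m + 1 := (dvd_mul_right 2 _).trans h
    lia

/-- The permutation of the torus `coordTorus K` induced by `monomialTwist ζ`. -/
noncomputable def monomialTwistPerm (hζ : ζ ≠ 0) : Equiv.Perm (coordTorus K) :=
  (bijOn_monomialTwist hζ).equiv

theorem coe_monomialTwistPerm_pow (hζ : ζ ≠ 0) (n : ℕ) (p : coordTorus K) :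
    ((monomialTwistPerm hζ ^ n) p : K × K × K) = (monomialTwist ζ)^[n] p := by
  rw [← Equiv.Perm.iterate_eq_pow]
  exact Function.Semiconj.iterate_right (f := Subtype.val) (fun _ => rfl) n p

theorem monomialTwistPerm_pow_eq_one_iff (hζ : ζ ≠ 0) (n : ℕ) :
    monomialTwistPerm hζ ^ n = 1 ↔ EqOn (monomialTwist ζ)^[n] id (coordTorus K) := by
  simp only [Equiv.ext_iff, Equiv.Perm.one_apply, Subtype.ext_iff, coe_monomialTwistPerm_pow,
    Subtype.forall, EqOn, id]

theorem orderOf_monomialTwistPerm [Nontrivial Kˣ] (hζ : ζ ≠ 0) :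
    orderOf (monomialTwistPerm hζ) = 2 * orderOf ζ :=
  Nat.dvd_right_iff_eq.mp fun n => by
    rw [orderOf_dvd_iff_pow_eq_one, monomialTwistPerm_pow_eq_one_iff,
      eqOn_iterate_monomialTwist_id_iff hζ]

theorem stmt_8_general [Nontrivial Kˣ] (hζ : ζ ≠ 0) :
    (∀ p ∈ coordTorus K, monomialTwist ζ p ∈ coordTorus K) ∧
    (∀ n w y z, (w, y, z) ∈ coordTorus K →
      (monomialTwist ζ)^[2 * n] (w, y, z) =
        (ζ ^ (3 * n) * w, ζ ^ (2 * n) * y, ζ ^ (2 * n) * z)) ∧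
    orderOf (monomialTwistPerm hζ) = 2 * orderOf ζ :=
  ⟨mapsTo_monomialTwist hζ,
    fun n w _ _ h => monomialTwist_iterate_two_mul hζ n w h.2.1 h.2.2,
    orderOf_monomialTwistPerm hζ⟩

end MonomialTwist

theorem sigma3_eq_monomialTwist : sigma3 = monomialTwist Complex.I := rfl

theorem Tset_eq_coordTorus : Tset = coordTorus ℂ := rfl

/-- `σ₃` maps `T` to itself, `σ₃² = (w,y,z) ↦ (-√-1·w, -y, -z)` on `T`, the fourth
iterate of `σ₃` equals `(w,y,z) ↦ (-w, y, z)`, and the eighth iterate of `σ₃` is the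
identity on `T`; hence `σ₃` has order exactly 8 as a permutation of `T`. -/
theorem stmt_8 :
    (∀ p ∈ Tset, sigma3 p ∈ Tset) ∧
    (∀ w y z : ℂ, (w, y, z) ∈ Tset →
      sigma3 (sigma3 (w, y, z)) = (-Complex.I * w, -y, -z)) ∧
    (∀ w y z : ℂ, (w, y, z) ∈ Tset → sigma3^[4] (w, y, z) = (-w, y, z)) ∧
    (∀ p ∈ Tset, sigma3^[8] p = p) := by
  have : Nontrivial ℂˣ := ⟨1, -1, by norm_num [Units.ext_iff]⟩
  obtain ⟨hmaps, hiter, horder⟩ := stmt_8_general Complex.I_ne_zero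
  have horder8 : orderOf (monomialTwistPerm Complex.I_ne_zero) = 8 := by
    rw [horder, ← Complex.isPrimitiveRoot_I.eq_orderOf]
  rw [sigma3_eq_monomialTwist, Tset_eq_coordTorus]
  refine ⟨hmaps, fun w y z h => ?_, fun w y z h => ?_, ?_⟩
  · simpa [Complex.I_pow_three] using hiter 1 w y z h
  · simpa [pow_mul] using hiter 2 w y z h
  · exact (monomialTwistPerm_pow_eq_one_iff _ 8).mp (orderOf_dvd_iff_pow_eq_one.mp horder8.dvd)
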